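/- Fix an integer d ≥ 1. For θ = (θ_0, θ_1, θ_2, θ_3, θ_4) ∈ (ℂ^d)^5 and r = (r_0, …, r_4) ∈ ℂ^5, set c^i(t) = r_i·∏_{j=1}^d (t − θ_i^j) (i = 0,…,4) and h(t) = c^1(t)c^2(t) + c^3(t)c^4(t). Define G : (ℂ^d)^5 × ℂ^5 → ℂ^{3d} × ℂ^4 × ℂ^{2d+1} by G(θ, r) = (θ_0, θ_1, θ_2, r_0, r_1, r_2, r_3, coefficient vector of h). Suppose the point (θ̃, y) satisfies: y_i ≠ 0 for all i; the 5d numbers θ̃_i^j are pairwise distinct; y_1y_2 + y_3y_4 ≠ 0 (so h has degree 2d); h has 2d pairwise distinct roots β_1, …, β_{2d}, all nonzero, none of which is a root of c^3 or of c^4; and c^3, c^4 are not proportional over ℂ. Then the Fréchet derivative over ℂ of G at (θ̃, y) is a ℂ-linear isomorphism of ℂ^{5d+5}. -/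

import Mathlib

open Polynomial

/-!
The coordinates `θ₀, θ₁, θ₂, r₀, …, r₃` are carried over unchanged, so a tangent vector killed by
the derivative moves only `θ₃`, `θ₄` and `r₄`. Its effect `f, g` on `c³` and `c⁴` satisfies
`f c⁴ + c³ g = 0`. As `c³` and `c⁴` have no common root, `c³ ∣ f`; since `r₃` is fixed,
`deg f < deg c³`, so `f = 0` and then `g = 0`. Polynomials with simple roots depend immersively
on their polar coordinates, hence the tangent vector vanishes. The two spaces have the same
dimension, so an injective derivative is bijective.
-/

section PolarCoordinates

variable {R ι : Type*} [CommRing R] [Fintype ι]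

/-- The polynomial `r ∏ⱼ (t - xⱼ)` with polar coordinates `(x, r)`: the component `cⁱ` of the
paper. -/
noncomputable def polarPoly (r : R) (x : ι → R) : R[X] :=
  C r * Lagrange.nodal Finset.univ x

theorem degree_polarPoly [IsDomain R] {r : R} (hr : r ≠ 0) (x : ι → R) :
    (polarPoly r x).degree = Fintype.card ι := by
  rw [polarPoly, degree_C_mul hr, Lagrange.degree_nodal, Finset.card_univ]

theorem natDegree_polarPoly_le [Nontrivial R] (r : R) (x : ι → R) :
    (polarPoly r x).natDegree ≤ Fintype.card ι :=
  (natDegree_C_mul_le r _).trans_eq (by rw [Lagrange.natDegree_nodal, Finset.card_univ])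

theorem isCoprime_polarPoly {K κ : Type*} [Field K] [Fintype κ] {r s : K} (hr : r ≠ 0)
    (hs : s ≠ 0) {x : ι → K} {z : κ → K} (hxz : ∀ i j, x i ≠ z j) :
    IsCoprime (polarPoly r x) (polarPoly s z) := by
  have hnodal : IsCoprime (Lagrange.nodal Finset.univ x) (Lagrange.nodal Finset.univ z) :=
    IsCoprime.prod_left fun i _ => IsCoprime.prod_right fun j _ =>
      isCoprime_X_sub_C_of_isUnit_sub (sub_ne_zero.2 (hxz i j)).isUnit
  exact (isCoprime_mul_unit_left_left (isUnit_C.2 hr.isUnit) _ _).2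
    ((isCoprime_mul_unit_left_right (isUnit_C.2 hs.isUnit) _ _).2 hnodal)

variable [DecidableEq ι]

/-- The derivative of `(x, r) ↦ polarPoly r x` at `(x, r)` in the direction `(a, ρ)`. -/
noncomputable def polarPolyDeriv (r : R) (x : ι → R) (ρ : R) (a : ι → R) : R[X] :=
  polarPoly ρ x - C r * ∑ j, C (a j) * Lagrange.nodal (Finset.univ.erase j) x

@[simp]
theorem polarPolyDeriv_zero (r : R) (x : ι → R) : polarPolyDeriv r x 0 0 = 0 := by
  simp [polarPolyDeriv, polarPoly]

theorem degree_sum_C_mul_nodal_erase_lt [Nontrivial R] (x a : ι → R) :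
    (∑ j, C (a j) * Lagrange.nodal (Finset.univ.erase j) x).degree < Fintype.card ι := by
  refine (degree_sum_le _ _).trans_lt ((Finset.sup_lt_iff (WithBot.bot_lt_coe _)).2 fun j _ => ?_)
  rw [← smul_eq_C_mul]
  refine (degree_smul_le _ _).trans_lt ?_
  rw [Lagrange.degree_nodal, Nat.cast_lt]
  exact Finset.card_erase_lt_of_mem (Finset.mem_univ j)

theorem degree_polarPolyDeriv_zero_lt [Nontrivial R] (r : R) (x a : ι → R) :
    (polarPolyDeriv r x 0 a).degree < Fintype.card ι := by
  rw [polarPolyDeriv, polarPoly, C_0, zero_mul, zero_sub, degree_neg, ← smul_eq_C_mul]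
  exact (degree_smul_le r _).trans_lt (degree_sum_C_mul_nodal_erase_lt x a)

theorem natDegree_polarPolyDeriv_le [Nontrivial R] (r : R) (x : ι → R) (ρ : R) (a : ι → R) :
    (polarPolyDeriv r x ρ a).natDegree ≤ Fintype.card ι :=
  (natDegree_sub_le _ _).trans <| max_le (natDegree_polarPoly_le ρ x) <|
    (natDegree_C_mul_le r _).trans <|
      natDegree_le_of_degree_le (degree_sum_C_mul_nodal_erase_lt x a).le

theorem eval_polarPolyDeriv_root (r : R) (x : ι → R) (ρ : R) (a : ι → R) (i : ι) :
    (polarPolyDeriv r x ρ a).eval (x i) =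
      -(r * (a i * (Lagrange.nodal (Finset.univ.erase i) x).eval (x i))) := by
  have hsum : ∑ j, a j * (Lagrange.nodal (Finset.univ.erase j) x).eval (x i) =
      a i * (Lagrange.nodal (Finset.univ.erase i) x).eval (x i) := by
    refine Finset.sum_eq_single i (fun j _ hj => ?_) (by simp)
    rw [Lagrange.eval_nodal_at_node (by simp [hj.symm]), mul_zero]
  simp only [polarPolyDeriv, polarPoly, eval_sub, eval_mul, eval_C, eval_finsetSum, hsum,
    Lagrange.eval_nodal_at_node (Finset.mem_univ i), mul_zero, zero_sub]

theorem polarPolyDeriv_eq_zero_iff [IsDomain R] {r : R} (hr : r ≠ 0) {x : ι → R}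
    (hx : Function.Injective x) {ρ : R} {a : ι → R} :
    polarPolyDeriv r x ρ a = 0 ↔ ρ = 0 ∧ a = 0 := by
  refine ⟨fun h => ?_, by rintro ⟨rfl, rfl⟩; exact polarPolyDeriv_zero r x⟩
  have ha : a = 0 := by
    funext i
    have hnodal : (Lagrange.nodal (Finset.univ.erase i) x).eval (x i) ≠ 0 :=
      Lagrange.eval_nodal_not_at_node fun j hj => hx.ne (Finset.ne_of_mem_erase hj).symm
    simpa [h, hr, hnodal] using eval_polarPolyDeriv_root r x ρ a i
  subst ha
  refine ⟨?_, rfl⟩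
  simpa [polarPolyDeriv, polarPoly, Lagrange.nodal_ne_zero] using h

theorem eq_zero_of_isCoprime_of_degree_lt [IsDomain R] {p q f g : R[X]} (hpq : IsCoprime p q)
    (hf : f.degree < p.degree) (h : f * q + p * g = 0) : f = 0 ∧ g = 0 := by
  have hdvd : p ∣ f :=
    hpq.dvd_of_dvd_mul_right <| (dvd_add_left (Dvd.intro g rfl)).1 (h ▸ dvd_zero p)
  obtain rfl : f = 0 := eq_zero_of_dvd_of_degree_lt hdvd hf
  have hp : p ≠ 0 := by rintro rfl; exact lt_irrefl _ hf
  exact ⟨rfl, by simpa [hp] using h⟩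

theorem eq_zero_of_polarPolyDeriv_mul_add_mul_eq_zero {K κ : Type*} [Field K] [Fintype κ]
    [DecidableEq κ] {r s σ : K} {x a : ι → K} {z b : κ → K} (hr : r ≠ 0) (hs : s ≠ 0)
    (hxz : Function.Injective (Sum.elim x z))
    (h : polarPolyDeriv r x 0 a * polarPoly s z + polarPoly r x * polarPolyDeriv s z σ b = 0) :
    a = 0 ∧ σ = 0 ∧ b = 0 := by
  obtain ⟨hx, hz, hne⟩ := Sum.elim_injective.1 hxz
  have hdeg : (polarPolyDeriv r x 0 a).degree < (polarPoly r x).degree :=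
    (degree_polarPolyDeriv_zero_lt r x a).trans_eq (degree_polarPoly hr x).symm
  obtain ⟨hf, hg⟩ := eq_zero_of_isCoprime_of_degree_lt (isCoprime_polarPoly hr hs hne) hdeg h
  exact ⟨((polarPolyDeriv_eq_zero_iff hr hx).1 hf).2, (polarPolyDeriv_eq_zero_iff hs hz).1 hg⟩

end PolarCoordinates

section CoefficientwiseDerivative

variable {𝕜 E : Type*} [NontriviallyNormedField 𝕜] [NormedAddCommGroup E] [NormedSpace 𝕜 E]

variable (𝕜) in
/-- The family `P` of polynomials is coefficientwise Fréchet differentiable at `x`, with derivative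
`P' v` in the direction `v`. It stands in for `HasFDerivAt`, since `𝕜[X]` carries no norm. -/
def HasCoeffFDerivAt (P P' : E → 𝕜[X]) (x : E) : Prop :=
  ∀ k, ∃ L : E →L[𝕜] 𝕜,
    HasFDerivAt (fun p => (P p).coeff k) L x ∧ ∀ v, L v = (P' v).coeff k

namespace HasCoeffFDerivAt

variable {P P' Q Q' : E → 𝕜[X]} {x : E}

theorem add (hP : HasCoeffFDerivAt 𝕜 P P' x) (hQ : HasCoeffFDerivAt 𝕜 Q Q' x) :
    HasCoeffFDerivAt 𝕜 (fun p => P p + Q p) (fun v => P' v + Q' v) x := by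
  intro k
  obtain ⟨L, hL, hLP⟩ := hP k
  obtain ⟨M, hM, hMQ⟩ := hQ k
  exact ⟨L + M, by simpa only [coeff_add] using hL.fun_add hM, by simp [hLP, hMQ]⟩

theorem mul (hP : HasCoeffFDerivAt 𝕜 P P' x) (hQ : HasCoeffFDerivAt 𝕜 Q Q' x) :
    HasCoeffFDerivAt 𝕜 (fun p => P p * Q p) (fun v => P' v * Q x + P x * Q' v) x := by
  intro k
  choose L hL hLP using hP
  choose M hM hMQ using hQ
  simp only [coeff_mul]
  refine ⟨_, HasFDerivAt.fun_sum fun i _ => (hL i.1).fun_mul (hM i.2), fun v => ?_⟩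
  simp [hLP, hMQ, coeff_mul, Finset.sum_add_distrib, mul_comm, add_comm]

theorem C_apply (L : E →L[𝕜] 𝕜) (x : E) :
    HasCoeffFDerivAt 𝕜 (fun p => C (L p)) (fun v => C (L v)) x := by
  rintro (_ | k)
  · exact ⟨L, by simpa using L.hasFDerivAt, by simp⟩
  · exact ⟨0, by simpa [coeff_C] using hasFDerivAt_const (0 : 𝕜) x, by simp⟩

theorem X_sub_C_apply (L : E →L[𝕜] 𝕜) (x : E) :
    HasCoeffFDerivAt 𝕜 (fun p => X - C (L p)) (fun v => -C (L v)) x := by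
  intro k
  obtain ⟨M, hM, hMC⟩ := C_apply L x k
  exact ⟨-M, by simpa only [coeff_sub] using hM.const_sub _, by simp [hMC]⟩

theorem finsetProd {ι : Type*} [DecidableEq ι] {s : Finset ι} {P P' : ι → E → 𝕜[X]}
    (hP : ∀ i ∈ s, HasCoeffFDerivAt 𝕜 (P i) (P' i) x) :
    HasCoeffFDerivAt 𝕜 (fun p => ∏ i ∈ s, P i p)
      (fun v => ∑ i ∈ s, P' i v * ∏ j ∈ s.erase i, P j x) x := by
  induction s using Finset.induction_on with
  | empty => exact fun k => ⟨0, by simpa using hasFDerivAt_const _ x, by simp⟩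
  | insert i s hi ih =>
    have herase : ∀ j ∈ s, ∏ k ∈ (insert i s).erase j, P k x = P i x * ∏ k ∈ s.erase j, P k x := by
      intro j hj
      rw [Finset.erase_insert_of_ne (ne_of_mem_of_not_mem hj hi).symm,
        Finset.prod_insert fun h => hi (Finset.mem_of_mem_erase h)]
    convert (hP i (Finset.mem_insert_self i s)).mul
      (ih fun j hj => hP j (Finset.mem_insert_of_mem hj)) using 2 with p v
    · exact Finset.prod_insert hi
    · rw [Finset.sum_insert hi, Finset.erase_insert hi, Finset.mul_sum]
      congr 1
      exact Finset.sum_congr rfl fun j hj => by rw [herase j hj, mul_left_comm]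

theorem polarPoly_apply {ι : Type*} [Fintype ι] [DecidableEq ι] (r : E →L[𝕜] 𝕜)
    (θ : ι → E →L[𝕜] 𝕜) (x : E) :
    HasCoeffFDerivAt 𝕜 (fun p => polarPoly (r p) fun j => θ j p)
      (fun v => polarPolyDeriv (r x) (fun j => θ j x) (r v) fun j => θ j v) x := by
  convert (C_apply r x).mul (finsetProd (s := Finset.univ) fun j _ => X_sub_C_apply (θ j) x)
    using 2 with p v
  · rfl
  · simp only [polarPolyDeriv, polarPoly, Lagrange.nodal, neg_mul, Finset.sum_neg_distrib,
      mul_neg, sub_eq_add_neg]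

end HasCoeffFDerivAt

end CoefficientwiseDerivative

section PolarMap

/-- The polynomial `h = c¹c² + c³c⁴` in the polar coordinates `p = (θ, r)` of `c`. -/
noncomputable def quadricPoly {R ι : Type*} [CommRing R] [Fintype ι]
    (p : (Fin 5 → ι → R) × (Fin 5 → R)) : R[X] :=
  polarPoly (p.2 1) (p.1 1) * polarPoly (p.2 2) (p.1 2) +
    polarPoly (p.2 3) (p.1 3) * polarPoly (p.2 4) (p.1 4)

/-- The derivative of `quadricPoly` at `p` in the direction `v`. -/
noncomputable def quadricPolyDeriv {R ι : Type*} [CommRing R] [Fintype ι] [DecidableEq ι]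
    (p v : (Fin 5 → ι → R) × (Fin 5 → R)) : R[X] :=
  let c i := polarPoly (p.2 i) (p.1 i)
  let c' i := polarPolyDeriv (p.2 i) (p.1 i) (v.2 i) (v.1 i)
  c' 1 * c 2 + c 1 * c' 2 + (c' 3 * c 4 + c 3 * c' 4)

/-- The map `ϱ` of the paper, with the leading coefficient and the roots of `h` replaced by its
coefficient vector: `(θ, r) ↦ (θ₀, θ₁, θ₂, r₀, r₁, r₂, r₃, coefficients of h)`. -/
noncomputable def polarMap {R : Type*} [CommRing R] {d : ℕ}
    (p : (Fin 5 → Fin d → R) × (Fin 5 → R)) :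
    (Fin 3 → Fin d → R) × (Fin 4 → R) × (Fin (2 * d + 1) → R) :=
  (fun i => p.1 (Fin.castLE (by norm_num) i), fun i => p.2 (Fin.castLE (by norm_num) i),
    fun k => (quadricPoly p).coeff k)

theorem natDegree_quadricPolyDeriv_le {R ι : Type*} [CommRing R] [Nontrivial R] [Fintype ι]
    [DecidableEq ι] (p v : (Fin 5 → ι → R) × (Fin 5 → R)) :
    (quadricPolyDeriv p v).natDegree ≤ 2 * Fintype.card ι := by
  have hc i : (polarPoly (p.2 i) (p.1 i)).natDegree ≤ Fintype.card ι :=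
    natDegree_polarPoly_le _ _
  have hc' i : (polarPolyDeriv (p.2 i) (p.1 i) (v.2 i) (v.1 i)).natDegree ≤ Fintype.card ι :=
    natDegree_polarPolyDeriv_le _ _ _ _
  rw [two_mul]
  exact natDegree_add_le_of_degree_le
    (natDegree_add_le_of_degree_le (natDegree_mul_le_of_le (hc' 1) (hc 2))
      (natDegree_mul_le_of_le (hc 1) (hc' 2)))
    (natDegree_add_le_of_degree_le (natDegree_mul_le_of_le (hc' 3) (hc 4))
      (natDegree_mul_le_of_le (hc 3) (hc' 4)))

variable {𝕜 : Type*} [NontriviallyNormedField 𝕜]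

theorem hasCoeffFDerivAt_quadricPoly {ι : Type*} [Fintype ι] [DecidableEq ι]
    (p : (Fin 5 → ι → 𝕜) × (Fin 5 → 𝕜)) :
    HasCoeffFDerivAt 𝕜 quadricPoly (quadricPolyDeriv p) p := by
  have hc (i : Fin 5) : HasCoeffFDerivAt 𝕜
      (fun q : (Fin 5 → ι → 𝕜) × (Fin 5 → 𝕜) => polarPoly (q.2 i) (q.1 i))
      (fun v => polarPolyDeriv (p.2 i) (p.1 i) (v.2 i) (v.1 i)) p := by
    let r : (Fin 5 → ι → 𝕜) × (Fin 5 → 𝕜) →L[𝕜] 𝕜 := .proj i ∘L .snd 𝕜 _ _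
    let θ (j : ι) : (Fin 5 → ι → 𝕜) × (Fin 5 → 𝕜) →L[𝕜] 𝕜 := .proj j ∘L .proj i ∘L .fst 𝕜 _ _
    exact .polarPoly_apply r θ p
  exact ((hc 1).mul (hc 2)).add ((hc 3).mul (hc 4))

variable {d : ℕ}

theorem fderiv_polarMap_apply (p v : (Fin 5 → Fin d → 𝕜) × (Fin 5 → 𝕜)) :
    fderiv 𝕜 polarMap p v =
      (fun i : Fin 3 => v.1 (Fin.castLE (by norm_num) i),
        fun i : Fin 4 => v.2 (Fin.castLE (by norm_num) i),
        fun k : Fin (2 * d + 1) => (quadricPolyDeriv p v).coeff k) := by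
  choose L hL hLh using hasCoeffFDerivAt_quadricPoly p
  let A : (Fin 5 → Fin d → 𝕜) × (Fin 5 → 𝕜) →L[𝕜] Fin 3 → Fin d → 𝕜 :=
    .pi fun i => .proj (Fin.castLE (by norm_num) i) ∘L .fst 𝕜 _ _
  let B : (Fin 5 → Fin d → 𝕜) × (Fin 5 → 𝕜) →L[𝕜] Fin 4 → 𝕜 :=
    .pi fun i => .proj (Fin.castLE (by norm_num) i) ∘L .snd 𝕜 _ _
  have hh : HasFDerivAt (fun q => fun k : Fin (2 * d + 1) => (quadricPoly q).coeff k)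
      (.pi fun k : Fin (2 * d + 1) => L k) p :=
    hasFDerivAt_pi.2 fun k => hL k
  have hmap : HasFDerivAt polarMap _ p := A.hasFDerivAt.prodMk (B.hasFDerivAt.prodMk hh)
  rw [hmap.fderiv]
  exact Prod.ext rfl (Prod.ext rfl (funext fun k => hLh k v))

theorem fderiv_polarMap_injective {p : (Fin 5 → Fin d → 𝕜) × (Fin 5 → 𝕜)} (h₃ : p.2 3 ≠ 0)
    (h₄ : p.2 4 ≠ 0) (hp : Function.Injective (Sum.elim (p.1 3) (p.1 4))) :
    Function.Injective (fderiv 𝕜 polarMap p) := by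
  refine (injective_iff_map_eq_zero _).2 fun ⟨a, ρ⟩ hv => ?_
  rw [fderiv_polarMap_apply] at hv
  obtain ⟨ha, hρ, hh⟩ : (∀ i : Fin 3, a (Fin.castLE (by norm_num) i) = 0) ∧
      (∀ i : Fin 4, ρ (Fin.castLE (by norm_num) i) = 0) ∧
      ∀ k : Fin (2 * d + 1), (quadricPolyDeriv p (a, ρ)).coeff k = 0 := by
    simpa only [Prod.ext_iff, funext_iff, Prod.fst_zero, Prod.snd_zero, Pi.zero_apply] using hv
  have hderiv : quadricPolyDeriv p (a, ρ) = 0 :=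
    (ext_iff_natDegree_le (n := 2 * d) (by simpa using natDegree_quadricPolyDeriv_le p (a, ρ))
      (by simp)).2 fun k hk => hh ⟨k, Nat.lt_succ_of_le hk⟩
  obtain ⟨a₀, a₁, a₂⟩ : a 0 = 0 ∧ a 1 = 0 ∧ a 2 = 0 := ⟨ha 0, ha 1, ha 2⟩
  obtain ⟨ρ₀, ρ₁, ρ₂, ρ₃⟩ : ρ 0 = 0 ∧ ρ 1 = 0 ∧ ρ 2 = 0 ∧ ρ 3 = 0 := ⟨hρ 0, hρ 1, hρ 2, hρ 3⟩
  obtain ⟨a₃, ρ₄, a₄⟩ : a 3 = 0 ∧ ρ 4 = 0 ∧ a 4 = 0 :=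
    eq_zero_of_polarPolyDeriv_mul_add_mul_eq_zero h₃ h₄ hp <| by
      simpa [quadricPolyDeriv, a₁, a₂, ρ₁, ρ₂, ρ₃] using hderiv
  refine Prod.ext (funext fun i => ?_) (funext fun i => ?_)
  · fin_cases i <;> assumption
  · fin_cases i <;> assumption

theorem stmt1_general {p : (Fin 5 → Fin d → 𝕜) × (Fin 5 → 𝕜)} (h₃ : p.2 3 ≠ 0) (h₄ : p.2 4 ≠ 0)
    (hp : Function.Injective (Sum.elim (p.1 3) (p.1 4))) :
    Function.Bijective (fderiv 𝕜 polarMap p) := by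
  have hinj := fderiv_polarMap_injective h₃ h₄ hp
  have hdim : Module.finrank 𝕜 ((Fin 5 → Fin d → 𝕜) × (Fin 5 → 𝕜)) =
      Module.finrank 𝕜 ((Fin 3 → Fin d → 𝕜) × (Fin 4 → 𝕜) × (Fin (2 * d + 1) → 𝕜)) := by
    simp only [Module.finrank_prod, Module.finrank_pi_fintype, Module.finrank_self,
      Finset.sum_const, Finset.card_univ, Fintype.card_fin, smul_eq_mul]
    ring
  exact ⟨hinj, (LinearMap.injective_iff_surjective_of_finrank_eq_finrank
    (f := (fderiv 𝕜 polarMap p : _ →ₗ[𝕜] _)) hdim).1 hinj⟩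

end PolarMap

/-- Proposition 3.1(a) of the paper, via coefficients.
With `c^i(t) = r_i ∏_j (t − θ_i^j)` and `h = c^1 c^2 + c^3 c^4`, the map
`G(θ, r) = (θ₀, θ₁, θ₂, r₀, r₁, r₂, r₃, coefficient vector of h)` has bijective
Fréchet derivative over `ℂ` at a point `(θ̃, y)` satisfying the listed genericity
conditions. -/
theorem stmt1 (d : ℕ) (hd : 1 ≤ d)
    (θ : Fin 5 → Fin d → ℂ) (y : Fin 5 → ℂ)
    (c : Fin 5 → Polynomial ℂ)
    (hc : ∀ i, c i = Polynomial.C (y i) * ∏ j, (Polynomial.X - Polynomial.C (θ i j)))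
    (h : Polynomial ℂ)
    (hh : h = c 1 * c 2 + c 3 * c 4)
    (hy : ∀ i, y i ≠ 0)
    (hθ : Function.Injective (fun p : Fin 5 × Fin d => θ p.1 p.2))
    (hlead : y 1 * y 2 + y 3 * y 4 ≠ 0)
    (β : Fin (2 * d) → ℂ)
    (hβinj : Function.Injective β)
    (hβroot : ∀ i, h.eval (β i) = 0)
    (hβ0 : ∀ i, β i ≠ 0)
    (hβ3 : ∀ i, (c 3).eval (β i) ≠ 0)
    (hβ4 : ∀ i, (c 4).eval (β i) ≠ 0)
    (hli : LinearIndependent ℂ ![c 3, c 4]) :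
    Function.Bijective
      (fderiv ℂ
        (fun p : (Fin 5 → Fin d → ℂ) × (Fin 5 → ℂ) =>
          ((fun i : Fin 3 => p.1 (Fin.castLE (by norm_num) i),
            fun i : Fin 4 => p.2 (Fin.castLE (by norm_num) i),
            fun k : Fin (2 * d + 1) =>
              ((Polynomial.C (p.2 1) * ∏ j, (Polynomial.X - Polynomial.C (p.1 1 j))) *
                  (Polynomial.C (p.2 2) * ∏ j, (Polynomial.X - Polynomial.C (p.1 2 j))) +
                (Polynomial.C (p.2 3) * ∏ j, (Polynomial.X - Polynomial.C (p.1 3 j))) *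
                  (Polynomial.C (p.2 4) * ∏ j, (Polynomial.X - Polynomial.C (p.1 4 j)))).coeff k) :
            (Fin 3 → Fin d → ℂ) × (Fin 4 → ℂ) × (Fin (2 * d + 1) → ℂ)))
        (θ, y)) := by
  have hinj : Function.Injective (Sum.elim (θ 3) (θ 4)) :=
    Sum.elim_injective.2 ⟨hθ.comp (Prod.mk_right_injective 3), hθ.comp (Prod.mk_right_injective 4),
      fun i j => hθ.ne (a₁ := (3, i)) (a₂ := (4, j)) (by simp)⟩
  exact stmt1_general (hy 3) (hy 4) hinj
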